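/- Let V = V₁ ⊕ V₂ be a real Banach space decomposed as a topological direct sum of two closed subspaces with dim V₂ < ∞, let e ∈ V₁ with ‖e‖ = 1, and let 0 < ρ < R₁ and R₂ > 0. Set S = {u ∈ V₁ : ‖u‖ = ρ}, Q = {s e + u₂ : 0 ≤ s ≤ R₁, u₂ ∈ V₂, ‖u₂‖ ≤ R₂}, and ∂Q = {s e + u₂ ∈ Q : s ∈ {0, R₁} or ‖u₂‖ = R₂}. Then S and ∂Q link: S ∩ ∂Q = ∅, and for every continuous map γ : V → V with γ(x) = x for all x ∈ ∂Q, one has γ(Q) ∩ S ≠ ∅. -/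

import Mathlib

/-!
The linking statement reduces to a form of Brouwer's theorem: a continuous map of a compact subset
`K` of a finite-dimensional space that fixes the frontier of `K` covers `K`. Indeed, if `γ` fixes
`∂Q`, then `(u₂, s) ↦ (P₂ γ(s e + u₂), ‖P₁ γ(s e + u₂)‖)` fixes the frontier of the parameter
cylinder, so it attains the value `(0, ρ)`, which means that `γ(Q)` meets `S`.

Brouwer's theorem follows from a volume computation of Milnor and Rogers. If `id + g` is `C¹` and
fixes the frontier of `K`, then for small `t` the map `id + t g` is a bijection of `K` with positive
Jacobian, so the polynomial `t ↦ ∫_K det (1 + t g')` is equal to the volume of `K` near `0`, hence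
also at `t = 1`. But for a map into a sphere the Jacobian vanishes identically, so a ball does not
retract onto its boundary sphere.
-/

open Set Filter

open scoped Polynomial Topology NNReal

section Polynomial

open MeasureTheory

lemma exists_finset_eval_eq_sum_mul_eval {F : Type*} [Field F] {T : Set F} (hT : T.Infinite)
    (n : ℕ) (a : F) :
    ∃ s : Finset F, ↑s ⊆ T ∧ ∃ w : F → F, ∀ p : F[X], p.natDegree ≤ n →
      p.eval a = ∑ t ∈ s, w t * p.eval t := by
  classical
  obtain ⟨s, hsT, hcard⟩ := hT.exists_subset_card_eq (n + 1)
  refine ⟨s, hsT, fun t => (Lagrange.basis s id t).eval a, fun p hp => ?_⟩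
  have hdeg : p.degree < s.card :=
    Polynomial.degree_le_natDegree.trans_lt (by exact_mod_cast hp.trans_lt (by omega))
  nth_rewrite 1 [Lagrange.eq_interpolate Function.injective_id.injOn hdeg]
  simp only [Lagrange.interpolate_apply, Polynomial.eval_finsetSum, Polynomial.eval_mul,
    Polynomial.eval_C, id, mul_comm]

lemma integral_eval_eq_of_infinite {α : Type*} {_ : MeasurableSpace α}
    {μ : Measure α} {p : α → ℝ[X]} {n : ℕ} (hdeg : ∀ x, (p x).natDegree ≤ n)
    (hint : ∀ t, Integrable (fun x => (p x).eval t) μ) {T : Set ℝ} (hT : T.Infinite)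
    {c : ℝ} (hc : ∀ t ∈ T, ∫ x, (p x).eval t ∂μ = c) (a : ℝ) :
    ∫ x, (p x).eval a ∂μ = c := by
  obtain ⟨s, hsT, w, hw⟩ := exists_finset_eval_eq_sum_mul_eval hT n a
  calc ∫ x, (p x).eval a ∂μ
      = ∫ x, ∑ t ∈ s, w t * (p x).eval t ∂μ := by simp only [hw _ (hdeg _)]
    _ = ∑ t ∈ s, w t * ∫ x, (p x).eval t ∂μ := by
        rw [integral_finsetSum _ fun t _ => (hint t).const_mul (w t)]
        simp only [integral_const_mul]
    _ = ∑ t ∈ s, w t * (Polynomial.C c).eval t :=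
        Finset.sum_congr rfl fun t ht => by rw [hc t (hsT ht), Polynomial.eval_C]
    _ = c := by rw [← hw _ (by simp), Polynomial.eval_C]

lemma exists_polynomial_eval_eq_det_one_add_smul {R M : Type*} [CommRing R] [Nontrivial R]
    [AddCommGroup M] [Module R M] [Module.Free R M] [Module.Finite R M] (A : M →ₗ[R] M) :
    ∃ p : R[X], p.natDegree ≤ Module.finrank R M ∧
      ∀ t : R, p.eval t = LinearMap.det (1 + t • A) := by
  classical
  let b := Module.Free.chooseBasis R M
  let B := LinearMap.toMatrix b b A
  refine ⟨Matrix.det ((Polynomial.X : R[X]) • B.map Polynomial.C +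
    (1 : Matrix _ _ R).map Polynomial.C), ?_, fun t => ?_⟩
  · rw [Module.finrank_eq_card_basis b]
    exact Polynomial.natDegree_det_X_add_C_le B 1
  · rw [← LinearMap.det_toMatrix b, map_add, map_smul, LinearMap.toMatrix_one, add_comm,
      ← Polynomial.coe_evalRingHom, RingHom.map_det]
    congr 1
    ext i j
    simp [B, Matrix.one_apply, apply_ite, mul_comm t]

end Polynomial

section Lipschitz

lemma inter_frontier_nonempty_of_isPreconnected {X : Type*} [TopologicalSpace X] {s t : Set X}
    (ht : IsPreconnected t) (hs : (t ∩ s).Nonempty) (hs' : (t ∩ sᶜ).Nonempty) :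
    (t ∩ frontier s).Nonempty := by
  by_contra hempty
  have hcover : t ⊆ interior s ∪ interior sᶜ := by
    rw [← compl_frontier_eq_union_interior]
    exact fun x hxt hx => hempty ⟨x, hxt, hx⟩
  obtain ⟨x, hxt, hxs⟩ := hs
  obtain ⟨y, hyt, hys⟩ := hs'
  obtain ⟨z, -, hzs, hzs'⟩ := ht _ _ isOpen_interior isOpen_interior hcover
    ⟨x, hxt, (hcover hxt).resolve_right fun h => interior_subset h hxs⟩
    ⟨y, hyt, (hcover hyt).resolve_left fun h => hys (interior_subset h)⟩
  exact interior_subset hzs' (interior_subset hzs)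

lemma lipschitzWith_indicator {E F : Type*} [SeminormedAddCommGroup E] [NormedSpace ℝ E]
    [SeminormedAddCommGroup F] {s : Set E} {g : E → F} {K : ℝ≥0} (hs : IsClosed s)
    (hg : LipschitzOnWith K g s) (hzero : ∀ x ∈ frontier s, g x = 0) :
    LipschitzWith K (s.indicator g) := by
  have mixed : ∀ x ∈ s, ∀ y ∉ s, dist (g x) 0 ≤ K * dist x y := by
    intro x hx y hy
    obtain ⟨z, hzseg, hz⟩ : (segment ℝ x y ∩ frontier s).Nonempty :=
      inter_frontier_nonempty_of_isPreconnected (convex_segment x y).isPreconnected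
        ⟨x, left_mem_segment ℝ x y, hx⟩ ⟨y, right_mem_segment ℝ x y, hy⟩
    calc dist (g x) 0 = dist (g x) (g z) := by rw [hzero z hz]
      _ ≤ K * dist x z := hg.dist_le_mul x hx z (hs.frontier_subset hz)
      _ ≤ K * dist x y := by
        gcongr
        linarith [dist_add_dist_of_mem_segment hzseg, dist_nonneg (x := z) (y := y)]
  refine LipschitzWith.of_dist_le_mul fun x y => ?_
  by_cases hx : x ∈ s <;> by_cases hy : y ∈ s <;>
    simp only [indicator_of_mem, indicator_of_notMem, hx, hy, not_false_eq_true]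
  · exact hg.dist_le_mul x hx y hy
  · exact mixed x hx y hy
  · rw [dist_comm, dist_comm x y]
    exact mixed y hy x hx
  · rw [dist_self]
    positivity

lemma bijective_add_of_lipschitzWith {E : Type*} [NormedAddCommGroup E] [NormedSpace ℝ E]
    [CompleteSpace E] {g : E → E} {K : ℝ≥0} (hg : LipschitzWith K g) (hK : K < 1) :
    Function.Bijective fun x => x + g x := by
  have happrox : ApproximatesLinearOn (fun x => x + g x)
      (ContinuousLinearEquiv.refl ℝ E : E →L[ℝ] E) univ K := by
    rw [ApproximatesLinearOn.approximatesLinearOn_iff_lipschitzOnWith, lipschitzOnWith_univ]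
    convert hg using 1
    ext x
    simp
  have hconst : Subsingleton E ∨
      K < ‖((ContinuousLinearEquiv.refl ℝ E).symm : E →L[ℝ] E)‖₊⁻¹ := by
    rcases subsingleton_or_nontrivial E with hE | hE
    · exact .inl hE
    refine .inr ?_
    rwa [show ‖((ContinuousLinearEquiv.refl ℝ E).symm : E →L[ℝ] E)‖₊ = 1 from
      ContinuousLinearMap.nnnorm_id, inv_one]
  exact ⟨injOn_univ.1 (happrox.injOn hconst), happrox.surjective hconst⟩

lemma bijOn_add_of_lipschitzOnWith {E : Type*} [NormedAddCommGroup E] [NormedSpace ℝ E]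
    [CompleteSpace E] {s : Set E} {g : E → E} {K : ℝ≥0} (hs : IsClosed s)
    (hg : LipschitzOnWith K g s) (hK : K < 1) (hzero : ∀ x ∈ frontier s, g x = 0) :
    BijOn (fun x => x + g x) s s := by
  -- Extended by the identity off `s`, the map is a bijection of `E` that fixes `sᶜ`, so it maps `s`
  -- onto itself.
  let f : E → E := fun x => x + s.indicator g x
  have hf : Function.Bijective f :=
    bijective_add_of_lipschitzWith (lipschitzWith_indicator hs hg hzero) hK
  have hcompl : f '' sᶜ = sᶜ :=
    (image_congr fun x hx => by simp [f, indicator_of_notMem hx]).trans (image_id sᶜ)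
  have himage : f '' s = s := by rwa [image_compl_eq hf, compl_inj_iff] at hcompl
  have hbij : BijOn f s s := by simpa only [himage] using hf.injective.injOn.bijOn_image (s := s)
  exact hbij.congr fun x hx => by simp [f, indicator_of_mem hx]

end Lipschitz

section ChangeOfVariables

open MeasureTheory

variable {E : Type*} [NormedAddCommGroup E] [NormedSpace ℝ E]

lemma eventually_forall_det_one_add_smul_pos {X : Type*} [TopologicalSpace X] {s : Set X}
    (hs : IsCompact s) {A : X → E →L[ℝ] E} (hA : Continuous A) :
    ∀ᶠ t : ℝ in 𝓝 0, ∀ x ∈ s, 0 < (1 + t • A x).det := by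
  refine hs.eventually_forall_of_forall_eventually fun x _ => ?_
  have hcont : Continuous fun z : ℝ × X => (1 + z.1 • A z.2).det :=
    ContinuousLinearMap.continuous_det.comp (by fun_prop)
  refine hcont.continuousAt.eventually_const_lt ?_
  simp [ContinuousLinearMap.det]

variable [FiniteDimensional ℝ E] [MeasurableSpace E] [BorelSpace E]
  (μ : Measure E) [μ.IsAddHaarMeasure] {s : Set E}

lemma eventually_setIntegral_det_one_add_smul_fderiv (hs : IsCompact s) {g : E → E}
    (hg : ContDiff ℝ 1 g) (hzero : ∀ x ∈ frontier s, g x = 0) :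
    ∀ᶠ t : ℝ in 𝓝 0, ∫ x in s, (1 + t • fderiv ℝ g x).det ∂μ = μ.real s := by
  obtain ⟨K, hK⟩ :=
    (hg.locallyLipschitz.locallyLipschitzOn (s := s)).exists_lipschitzOnWith_of_compact hs
  have hsmall : ∀ᶠ t : ℝ in 𝓝 0, ‖t‖₊ * K < 1 :=
    ((continuous_nnnorm.mul continuous_const).tendsto' (0 : ℝ) 0 (by simp)).eventually_lt_const
      one_pos
  filter_upwards [hsmall, eventually_forall_det_one_add_smul_pos hs
    (hg.continuous_fderiv one_ne_zero)] with t ht hdet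
  have hbij : BijOn (fun x => x + t • g x) s s :=
    bijOn_add_of_lipschitzOnWith hs.isClosed ((lipschitzWith_smul t).comp_lipschitzOnWith hK) ht
      fun x hx => by simp [hzero x hx]
  have hderiv : ∀ x ∈ s,
      HasFDerivWithinAt (fun x => x + t • g x) (1 + t • fderiv ℝ g x) s x := fun x _ =>
    ((hasFDerivAt_id x).add
      ((hg.differentiable one_ne_zero x).hasFDerivAt.const_smul t)).hasFDerivWithinAt
  calc ∫ x in s, (1 + t • fderiv ℝ g x).det ∂μ
      = ∫ x in s, |(1 + t • fderiv ℝ g x).det| • (1 : ℝ) ∂μ :=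
        setIntegral_congr_fun hs.measurableSet fun x hx => by simp [abs_of_pos (hdet x hx)]
    _ = ∫ _ in (fun x => x + t • g x) '' s, (1 : ℝ) ∂μ :=
        (integral_image_eq_integral_abs_det_fderiv_smul μ hs.measurableSet hderiv hbij.injOn
          fun _ => 1).symm
    _ = μ.real s := by simp [hbij.image_eq]

lemma setIntegral_det_fderiv_eq_measureReal (hs : IsCompact s) {f : E → E}
    (hf : ContDiff ℝ 1 f) (hid : EqOn f id (frontier s)) :
    ∫ x in s, (fderiv ℝ f x).det ∂μ = μ.real s := by
  let g : E → E := fun x => f x - x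
  have hg : ContDiff ℝ 1 g := hf.sub contDiff_id
  have hfderiv : ∀ x, fderiv ℝ f x = 1 + (1 : ℝ) • fderiv ℝ g x := fun x => by
    rw [one_smul, fderiv_fun_sub (hf.differentiable one_ne_zero x) differentiableAt_fun_id,
      fderiv_fun_id, ← ContinuousLinearMap.one_def, add_sub_cancel]
  choose p hdeg heval using fun x =>
    exists_polynomial_eval_eq_det_one_add_smul (fderiv ℝ g x).toLinearMap
  have hdet : ∀ t x, (p x).eval t = (1 + t • fderiv ℝ g x).det := fun t x => heval x t
  have hint : ∀ t, IntegrableOn (fun x => (p x).eval t) s μ := fun t => by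
    simp only [hdet]
    exact (ContinuousLinearMap.continuous_det.comp (continuous_const.add
      ((hg.continuous_fderiv one_ne_zero).const_smul t))).continuousOn.integrableOn_compact hs
  have hnear := eventually_setIntegral_det_one_add_smul_fderiv μ hs hg
    fun x hx => sub_eq_zero.2 (hid hx)
  have hone := integral_eval_eq_of_infinite hdeg hint (infinite_of_mem_nhds 0 hnear)
    (fun t ht => by simpa only [hdet] using mem_ofPred.1 ht) 1
  simpa only [hdet, ← hfderiv] using hone

end ChangeOfVariables

section Brouwer

open MeasureTheory

variable {E : Type*} [NormedAddCommGroup E] [InnerProductSpace ℝ E] [FiniteDimensional ℝ E]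

lemma det_eq_zero_of_eventually_norm_eq {r : E → E} {A : E →L[ℝ] E} {x : E} {R : ℝ}
    (hr : HasFDerivAt r A x) (hnorm : ∀ᶠ y in 𝓝 x, ‖r y‖ = R) (hR : R ≠ 0) : A.det = 0 := by
  by_contra hdet
  obtain ⟨v, hv⟩ := (LinearMap.equivOfDetNeZero A.toLinearMap hdet).surjective (r x)
  replace hv : A v = r x := hv
  have hsq : HasFDerivAt (fun y => ‖r y‖ ^ 2) (0 : E →L[ℝ] ℝ) x :=
    (hasFDerivAt_const (R ^ 2) x).congr_of_eventuallyEq (hnorm.mono fun y hy => by simp only [hy])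
  have hzero : 2 * ‖r x‖ ^ 2 = 0 := by
    simpa [hv] using congrArg (fun L : E →L[ℝ] ℝ => L v) (hr.norm_sq.unique hsq)
  rw [hnorm.self_of_nhds] at hzero
  exact hR (by simpa using hzero)

lemma not_exists_contDiff_retraction_sphere {R : ℝ} (hR : 0 < R) :
    ¬ ∃ r : E → E, ContDiff ℝ 1 r ∧ (∀ x, ‖r x‖ = R) ∧ EqOn r id (Metric.sphere 0 R) := by
  rintro ⟨r, hr, hnorm, hid⟩
  borelize E
  let B : Set E := Metric.closedBall 0 R
  have hdet : ∀ x, (fderiv ℝ r x).det = 0 := fun x =>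
    det_eq_zero_of_eventually_norm_eq (hr.differentiable one_ne_zero x).hasFDerivAt
      (.of_forall hnorm) hR.ne'
  have hvol : volume.real B = 0 := by
    rw [← setIntegral_det_fderiv_eq_measureReal volume (isCompact_closedBall 0 R) hr
      (by rwa [frontier_closedBall _ hR.ne'])]
    simp only [hdet, integral_zero]
  have hpos : 0 < volume.real B :=
    ENNReal.toReal_pos (Metric.measure_closedBall_pos _ _ hR).ne'
      (isCompact_closedBall 0 R).measure_lt_top.ne
  exact hpos.ne' hvol

lemma exists_add_eq_zero_of_contDiff_of_hasCompactSupport {g : E → E} (hg : ContDiff ℝ 1 g)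
    (hsupp : HasCompactSupport g) : ∃ x, x + g x = 0 := by
  by_contra! hne
  obtain ⟨R, hR, hgR⟩ := hsupp.exists_pos_le_norm
  have hadd : ContDiff ℝ 1 fun x => x + g x := contDiff_id.add hg
  refine not_exists_contDiff_retraction_sphere hR
    ⟨fun x => (R / ‖x + g x‖) • (x + g x), ?_, fun x => ?_, fun x hx => ?_⟩
  · exact (contDiff_const.div (hadd.norm ℝ hne) fun x => norm_ne_zero_iff.2 (hne x)).smul hadd
  · rw [norm_smul, norm_div, norm_norm, div_mul_cancel₀ _ (norm_ne_zero_iff.2 (hne x)),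
      Real.norm_of_nonneg hR.le]
  · rw [mem_sphere_zero_iff_norm] at hx
    simp [hgR x hx.ge, hx, hR.ne']

lemma exists_add_eq_zero_of_hasCompactSupport {g : E → E} (hg : Continuous g)
    (hsupp : HasCompactSupport g) : ∃ x, x + g x = 0 := by
  by_contra! hne
  obtain ⟨g', hg', happrox, hsubset⟩ := hg.exists_contDiff_approx 1
    (ε := fun x => ‖x + g x‖) (by fun_prop) fun x => norm_pos_iff.2 (hne x)
  obtain ⟨x, hx⟩ := exists_add_eq_zero_of_contDiff_of_hasCompactSupport hg'
    (hsupp.mono hsubset)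
  refine (happrox x).ne ?_
  rw [dist_comm, dist_eq_norm, eq_neg_of_add_eq_zero_right hx, sub_neg_eq_add, add_comm]

variable {W : Type*} [NormedAddCommGroup W] [NormedSpace ℝ W] [FiniteDimensional ℝ W]

lemma surjective_add_of_hasCompactSupport {g : W → W} (hg : Continuous g)
    (hsupp : HasCompactSupport g) : Function.Surjective fun x => x + g x := by
  intro c
  let L := toEuclidean (E := W)
  let φ := L.symm.toHomeomorph.trans (Homeomorph.addRight c)
  obtain ⟨y, hy⟩ := exists_add_eq_zero_of_hasCompactSupport (g := L ∘ g ∘ φ) (by fun_prop)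
    ((hsupp.comp_homeomorph φ).comp_left (map_zero L))
  refine ⟨L.symm y + c, ?_⟩
  have hy' : L.symm y + g (L.symm y + c) = 0 := by simpa [φ] using congrArg L.symm hy
  change L.symm y + c + g (L.symm y + c) = c
  rw [add_right_comm, hy', zero_add]

theorem subset_image_of_eqOn_id_frontier {s : Set W} (hs : IsCompact s) {f : W → W}
    (hf : ContinuousOn f s) (hid : EqOn f id (frontier s)) : s ⊆ f '' s := by
  intro c hc
  let g : W → W := s.indicator fun x => f x - x
  have hg : Continuous g := continuous_indicator (fun x hx => sub_eq_zero.2 (hid hx))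
    (hs.isClosed.closure_eq.symm ▸ hf.sub continuousOn_id)
  have hsupp : HasCompactSupport g := .intro hs fun x hx => indicator_of_notMem hx _
  obtain ⟨x, hx : x + g x = c⟩ := surjective_add_of_hasCompactSupport hg hsupp c
  by_cases hxs : x ∈ s
  · exact ⟨x, hxs, by simpa [g, hxs] using hx⟩
  · have hxc : x = c := by simpa [g, hxs] using hx
    exact absurd (hxc ▸ hc) hxs

end Brouwer

/-- `S` and the boundary `bQ` of `Q` link: they are disjoint, and no continuous deformation of `Q`
that fixes `bQ` avoids `S`. The deformation only has to be defined and continuous on `Q`, whereas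
it is often taken to be a self-map of the whole space. -/
def Links {X : Type*} [TopologicalSpace X] (S Q bQ : Set X) : Prop :=
  S ∩ bQ = ∅ ∧ ∀ γ : X → X, ContinuousOn γ Q → EqOn γ id bQ → (γ '' Q ∩ S).Nonempty

section Linking

variable {V : Type*} [NormedAddCommGroup V] [NormedSpace ℝ V] {V₁ V₂ : Submodule ℝ V}
  {e : V} {ρ R₁ R₂ : ℝ}

/-- The sphere `S` of radius `ρ` about the origin in the subspace `V₁`. -/
def subspaceSphere (V₁ : Submodule ℝ V) (ρ : ℝ) : Set V :=
  {u | u ∈ V₁ ∧ ‖u‖ = ρ}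

/-- The set `Q`: a cylinder with axis `[0, R₁] • e` over the closed `R₂`-ball of `V₂`. -/
def cylinder (V₂ : Submodule ℝ V) (e : V) (R₁ R₂ : ℝ) : Set V :=
  {x | ∃ s : ℝ, ∃ u₂ ∈ V₂, 0 ≤ s ∧ s ≤ R₁ ∧ ‖u₂‖ ≤ R₂ ∧ x = s • e + u₂}

/-- The set `∂Q`: the two ends and the lateral face of `cylinder V₂ e R₁ R₂`. It is the boundary of
the cylinder relative to `span e + V₂`, not its frontier in `V`. -/
def cylinderBoundary (V₂ : Submodule ℝ V) (e : V) (R₁ R₂ : ℝ) : Set V :=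
  {x | ∃ s : ℝ, ∃ u₂ ∈ V₂, 0 ≤ s ∧ s ≤ R₁ ∧ ‖u₂‖ ≤ R₂ ∧
    (s = 0 ∨ s = R₁ ∨ ‖u₂‖ = R₂) ∧ x = s • e + u₂}

/-- The parametrization of `cylinder V₂ e R₁ R₂` by `closedBall 0 R₂ ×ˢ Icc 0 R₁`. -/
def cylinderMap (V₂ : Submodule ℝ V) (e : V) (w : V₂ × ℝ) : V :=
  w.2 • e + w.1

/-- The `V₂`-component of a vector together with the norm of its `V₁`-component: a left inverse of
`cylinderMap V₂ e` over `V₂ × [0, ∞)`, whose fibre over `(0, ρ)` is the sphere of radius `ρ`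
in `V₁`. -/
noncomputable def cylinderCoord (h : V₁.IsTopCompl V₂) (x : V) : V₂ × ℝ :=
  (V₂.projectionOntoL V₁ h.symm x, ‖V₁.projectionL V₂ h x‖)

lemma continuous_cylinderMap : Continuous (cylinderMap V₂ e) := by
  unfold cylinderMap
  fun_prop

lemma continuous_cylinderCoord (h : V₁.IsTopCompl V₂) : Continuous (cylinderCoord h) := by
  unfold cylinderCoord
  fun_prop

lemma cylinderCoord_cylinderMap (h : V₁.IsTopCompl V₂) (he₁ : e ∈ V₁) (he : ‖e‖ = 1)
    {w : V₂ × ℝ} (hw : 0 ≤ w.2) : cylinderCoord h (cylinderMap V₂ e w) = w := by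
  have hfst : V₂.projectionOntoL V₁ h.symm (w.2 • e + w.1) = w.1 := by
    simp [he₁]
  have hsnd : V₁.projectionL V₂ h (w.2 • e + w.1) = w.2 • e := by
    rw [map_add, map_smul, Submodule.projectionL_apply_left h ⟨e, he₁⟩,
      Submodule.projectionL_apply_right h w.1, add_zero]
  ext1
  · exact hfst
  · simp only [cylinderCoord, cylinderMap, hsnd, norm_smul, he, mul_one, Real.norm_of_nonneg hw]

lemma mem_subspaceSphere_of_cylinderCoord_eq (h : V₁.IsTopCompl V₂) {x : V}
    (hx : cylinderCoord h x = (0, ρ)) : x ∈ subspaceSphere V₁ ρ := by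
  obtain ⟨hfst, hsnd⟩ := Prod.mk.inj hx
  have hx₁ : x ∈ V₁ := (Submodule.projectionOntoL_apply_eq_zero_iff h.symm).1 hfst
  exact ⟨hx₁, by rwa [Submodule.projectionL_apply_left h ⟨x, hx₁⟩] at hsnd⟩

lemma cylinderMap_mem_cylinder {w : V₂ × ℝ} (hw : w ∈ Metric.closedBall 0 R₂ ×ˢ Icc 0 R₁) :
    cylinderMap V₂ e w ∈ cylinder V₂ e R₁ R₂ :=
  ⟨w.2, w.1, w.1.2, hw.2.1, hw.2.2, mem_closedBall_zero_iff.1 hw.1, rfl⟩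

lemma cylinderMap_mem_cylinderBoundary (hR₁ : 0 ≤ R₁) (hR₂ : R₂ ≠ 0) {w : V₂ × ℝ}
    (hw : w ∈ frontier (Metric.closedBall 0 R₂ ×ˢ Icc 0 R₁)) :
    cylinderMap V₂ e w ∈ cylinderBoundary V₂ e R₁ R₂ := by
  rw [frontier_prod_eq, frontier_Icc hR₁, frontier_closedBall _ hR₂,
    Metric.isClosed_closedBall.closure_eq, isClosed_Icc.closure_eq] at hw
  rcases hw with ⟨hball, hends⟩ | ⟨hsphere, hIcc⟩
  · have hnorm : ‖w.1‖ ≤ R₂ := mem_closedBall_zero_iff.1 hball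
    rcases hends with hs | hs
    · exact ⟨w.2, w.1, w.1.2, hs.ge, hs.le.trans hR₁, hnorm, .inl hs, rfl⟩
    · exact ⟨w.2, w.1, w.1.2, hR₁.trans_eq hs.symm, hs.le, hnorm, .inr (.inl hs), rfl⟩
  · have hnorm : ‖w.1‖ = R₂ := mem_sphere_zero_iff_norm.1 hsphere
    exact ⟨w.2, w.1, w.1.2, hIcc.1, hIcc.2, hnorm.le, .inr (.inr hnorm), rfl⟩

lemma subspaceSphere_inter_cylinderBoundary (h : Disjoint V₁ V₂) (he₁ : e ∈ V₁) (he : ‖e‖ = 1)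
    (hρ : ρ ≠ 0) (hρR₁ : ρ ≠ R₁) (hR₂ : R₂ ≠ 0) :
    subspaceSphere V₁ ρ ∩ cylinderBoundary V₂ e R₁ R₂ = ∅ := by
  rw [eq_empty_iff_forall_notMem]
  rintro _ ⟨⟨hx₁, hnorm⟩, s, u₂, hu₂, hs, -, -, hface, rfl⟩
  have hu₁ : u₂ ∈ V₁ := (V₁.add_mem_iff_right (V₁.smul_mem s he₁)).1 hx₁
  obtain rfl : u₂ = 0 := Submodule.disjoint_def.1 h u₂ hu₁ hu₂
  rw [add_zero, norm_smul, he, mul_one, Real.norm_of_nonneg hs] at hnorm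
  subst hnorm
  rcases hface with h0 | h1 | h2
  · exact hρ h0
  · exact hρR₁ h1
  · exact hR₂ (by rw [← h2, norm_zero])

theorem generalized_mountain_pass_geometry_links_general (h : V₁.IsTopCompl V₂)
    [FiniteDimensional ℝ V₂] (he₁ : e ∈ V₁) (he : ‖e‖ = 1) (hρ : 0 < ρ) (hρR₁ : ρ < R₁)
    (hR₂ : 0 < R₂) :
    Links (subspaceSphere V₁ ρ) (cylinder V₂ e R₁ R₂) (cylinderBoundary V₂ e R₁ R₂) := by
  refine ⟨subspaceSphere_inter_cylinderBoundary h.isCompl.disjoint he₁ he hρ.ne' hρR₁.ne hR₂.ne',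
    fun γ hγ hid => ?_⟩
  let K : Set (V₂ × ℝ) := Metric.closedBall 0 R₂ ×ˢ Icc 0 R₁
  have hK : IsCompact K := (isCompact_closedBall 0 R₂).prod isCompact_Icc
  let f : V₂ × ℝ → V₂ × ℝ := cylinderCoord h ∘ γ ∘ cylinderMap V₂ e
  have hf : ContinuousOn f K := (continuous_cylinderCoord h).comp_continuousOn
    (hγ.comp continuous_cylinderMap.continuousOn fun _ => cylinderMap_mem_cylinder)
  have hfid : EqOn f id (frontier K) := fun w hw => by
    have hγw : γ (cylinderMap V₂ e w) = cylinderMap V₂ e w :=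
      hid (cylinderMap_mem_cylinderBoundary (hρ.trans hρR₁).le hR₂.ne' hw)
    have hw₀ : 0 ≤ w.2 := (hK.isClosed.frontier_subset hw).2.1
    simp only [f, Function.comp_apply, hγw, cylinderCoord_cylinderMap h he₁ he hw₀, id]
  obtain ⟨w, hwK, hw⟩ := subset_image_of_eqOn_id_frontier hK hf hfid
    (show ((0 : V₂), ρ) ∈ K from ⟨Metric.mem_closedBall_self hR₂.le, hρ.le, hρR₁.le⟩)
  exact ⟨γ (cylinderMap V₂ e w), mem_image_of_mem γ (cylinderMap_mem_cylinder hwK),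
    mem_subspaceSphere_of_cylinderCoord_eq h hw⟩

end Linking

/-- **Example 2: the generalized mountain pass geometry links.**
Let `V = V₁ ⊕ V₂` be a real Banach space, a topological direct sum of two
closed subspaces with `dim V₂ < ∞`, let `e ∈ V₁` with `‖e‖ = 1`, and let
`0 < ρ < R₁`, `R₂ > 0`. With `S = {u ∈ V₁ : ‖u‖ = ρ}`,
`Q = {s•e + u₂ : 0 ≤ s ≤ R₁, u₂ ∈ V₂, ‖u₂‖ ≤ R₂}` and
`bQ = {s•e + u₂ ∈ Q : s ∈ {0, R₁} or ‖u₂‖ = R₂}`, the sets `S` and `bQ` link: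
`S ∩ bQ = ∅` and every continuous `γ : V → V` fixing `bQ` satisfies
`γ(Q) ∩ S ≠ ∅`. -/
theorem generalized_mountain_pass_geometry_links
    {V : Type*} [NormedAddCommGroup V] [NormedSpace ℝ V] [CompleteSpace V]
    (V₁ V₂ : Submodule ℝ V)
    (hV₁closed : IsClosed (V₁ : Set V)) (hV₂closed : IsClosed (V₂ : Set V))
    (hcompl : IsCompl V₁ V₂) (hfin : FiniteDimensional ℝ V₂)
    (e : V) (he₁ : e ∈ V₁) (he : ‖e‖ = 1)
    (ρ R₁ R₂ : ℝ) (hρ : 0 < ρ) (hρR₁ : ρ < R₁) (hR₂ : 0 < R₂) :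
    (({ u : V | u ∈ V₁ ∧ ‖u‖ = ρ } : Set V) ∩
      { x : V | ∃ s : ℝ, ∃ u₂ ∈ V₂, 0 ≤ s ∧ s ≤ R₁ ∧ ‖u₂‖ ≤ R₂ ∧
        (s = 0 ∨ s = R₁ ∨ ‖u₂‖ = R₂) ∧ x = s • e + u₂ } = ∅) ∧
    ∀ γ : V → V, Continuous γ →
      (∀ x ∈ { x : V | ∃ s : ℝ, ∃ u₂ ∈ V₂, 0 ≤ s ∧ s ≤ R₁ ∧ ‖u₂‖ ≤ R₂ ∧
          (s = 0 ∨ s = R₁ ∨ ‖u₂‖ = R₂) ∧ x = s • e + u₂ }, γ x = x) →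
      (γ '' { x : V | ∃ s : ℝ, ∃ u₂ ∈ V₂, 0 ≤ s ∧ s ≤ R₁ ∧ ‖u₂‖ ≤ R₂ ∧
          x = s • e + u₂ } ∩
        { u : V | u ∈ V₁ ∧ ‖u‖ = ρ }).Nonempty := by
  obtain ⟨hdisjoint, hmeets⟩ := generalized_mountain_pass_geometry_links_general
    (Submodule.IsCompl.isTopCompl_of_isClosed_of_finiteDimensional hcompl hV₁closed)
    he₁ he hρ hρR₁ hR₂
  exact ⟨hdisjoint, fun γ hγ hid => hmeets γ hγ.continuousOn hid⟩
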